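/- (Modified energy identity.) Fix κ ∈ {+1, −1}. Let s ∈ ℝ, ε > 0 with s + ε ≤ 0 and let a ∈ S^s_ε with constants (C_k). Define b₄^κ on ℝ⁴ by b₄^κ(ξ₁,ξ₂,ξ₃,ξ₄) = (κ/2)(a(ξ₁)+a(ξ₂)−a(ξ₃)−a(ξ₄))/(ξ₁²+ξ₂²−ξ₃²−ξ₄²) whenever ξ₁²+ξ₂²−ξ₃²−ξ₄² ≠ 0, and b₄^κ = 0 otherwise, and for u ∈ 𝒮(ℝ;ℂ) set E₁(u) = (2π)^{−1} ∫_{ℝ³} b₄^κ(ξ₁,ξ₂,ξ₃,ξ₄) û(ξ₁) û(ξ₂) conj(û(ξ₃)) conj(û(ξ₄)) dξ₁ dξ₂ dξ₃, with ξ₄ = ξ₁+ξ₂−ξ₃. Let I ⊆ ℝ be an open interval and let u be such that t ↦ u(t,·) is a continuously differentiable map from I into 𝒮(ℝ;ℂ) solving i∂_t u − ∂_x² u + κ|u|²u = 0 pointwise on I × ℝ. Then E₁(u(t)) is real for every t, the map t ↦ E₀(u(t)) + E₁(u(t)) is differentiable on I, and d/dt [E₀(u(t)) + E₁(u(t))]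 = −(2κ/π) Im ∫_{ℝ³} b₄^κ(ξ₁,ξ₂,ξ₃,ξ₄) · (|u(t)|²u(t))^(ξ₁) · û(t,ξ₂) · conj(û(t,ξ₃)) · conj(û(t,ξ₄)) dξ₁ dξ₂ dξ₃, with ξ₄ = ξ₁+ξ₂−ξ₃, where (|u(t)|²u(t))^ is the Fourier transform in x of x ↦ |u(t,x)|²u(t,x). -/

import Mathlib

/-!
Write `g = û(t)` and let `n` be the Fourier transform of `|u|²u`. On the Fourier side the equation
reads `∂ₜg = iξ²g + iκn`.

The quartic form `Q(g₁, g₂, g₃, g₄)` with multiplier `b₄` is symmetric in its first two and in its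
last two slots, and exchanging the two pairs conjugates it (`quadForm_swap12`, `quadForm_swap34`,
`quadForm_conj`). Hence `Q(g, g, g, g)` is real, and the product rule gives
`∂ₜQ = 4 Re Q(∂ₜg, g, g, g) = -4 Im Q(ξ²g, g, g, g) - 4κ Im Q(n, g, g, g)`.
Symmetrizing again, `4i Im Q(ξ²g, g, g, g)` is the form with multiplier
`b₄ · (ξ₁² + ξ₂² - ξ₃² - ξ₄²) = (κ/2)(a(ξ₁) + a(ξ₂) - a(ξ₃) - a(ξ₄))`, an identity that holds on the
resonant set as well, where both sides vanish; this is `resonance_cancellation`. In the derivative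
of `E₀` the term `iξ²g` drops out, and the convolution formula for `n` turns the remaining term
`-2κ Im ∫ a ḡ n` into the quartic form with multiplier `a(ξ₃)` (`cubic_pairing`). The two
contributions cancel, and only `-4κ (2π)⁻¹ Im Q(n, g, g, g)` survives.

All differentiations and rearrangements rest on the boundedness of `b₄` (`b4k_bound`): with
`ξ₄ = ξ₁ + ξ₂ - ξ₃` its numerator is a second difference of `a` with increments `ξ₁ - ξ₃` and
`ξ₃ - ξ₂`, whose product is half the denominator, and the second derivative of `a` is bounded
because `s + ε ≤ 0`. The integrands are then dominated by a multiple of `∏ⱼ (1 + ξⱼ²)⁻¹`, `j ≤ 3`,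
locally uniformly in time, since the decay constant of `f̂` is a continuous function of `f` in the
Schwartz topology.
-/

open MeasureTheory Filter Set
open scoped ENNReal NNReal Topology

/-- The normalization constant `(2π)^(-1/2)` of the unitary Fourier transform. -/
noncomputable def fourierWeight : ℝ := (Real.sqrt (2 * Real.pi))⁻¹

/-- The pointwise Fourier integral `f̂(ξ) = (2π)^{-1/2} ∫ e^{-ixξ} f(x) dx`. -/
noncomputable def ftPt (f : ℝ → ℂ) (ξ : ℝ) : ℂ :=
  (fourierWeight : ℂ) * ∫ x : ℝ, Complex.exp (-(Complex.I * x * ξ)) * f x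

/-- The symbol class `S^s_ε` with constants `Ck`. -/
def IsSymbolS (s ε : ℝ) (Ck : ℕ → ℝ) (a : ℝ → ℝ) : Prop :=
  ContDiff ℝ (⊤ : ℕ∞) a ∧ (∀ ξ : ℝ, 0 < a ξ) ∧ (∀ ξ : ℝ, a (-ξ) = a ξ) ∧
    (∀ (k : ℕ) (ξ : ℝ), |iteratedDeriv k a ξ| ≤ Ck k * a ξ * (1 + ξ ^ 2) ^ (-(k : ℝ) / 2)) ∧
    (∀ ξ : ℝ, (1 + ξ ^ 2) ^ s ≤ a ξ ∧ a ξ ≤ (1 + ξ ^ 2) ^ (s + ε)) ∧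
    (∀ ξ : ℝ, ξ ≠ 0 →
      s - ε ≤ (1 + ξ ^ 2) * deriv a ξ / (2 * ξ * a ξ) ∧
        (1 + ξ ^ 2) * deriv a ξ / (2 * ξ * a ξ) ≤ s + ε)

/-- The quadrilinear multiplier `b₄^κ`, set to `0` on the resonant set. -/
noncomputable def b4k (κ : ℝ) (a : ℝ → ℝ) (ξ₁ ξ₂ ξ₃ ξ₄ : ℝ) : ℝ :=
  if ξ₁ ^ 2 + ξ₂ ^ 2 - ξ₃ ^ 2 - ξ₄ ^ 2 = 0 then 0
  else (κ / 2) * ((a ξ₁ + a ξ₂ - a ξ₃ - a ξ₄) / (ξ₁ ^ 2 + ξ₂ ^ 2 - ξ₃ ^ 2 - ξ₄ ^ 2))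

/-- The generalized energy `E₀(f) = ∫ a(ξ) |f̂(ξ)|² dξ`. -/
noncomputable def E0 (a : ℝ → ℝ) (f : ℝ → ℂ) : ℝ := ∫ ξ : ℝ, a ξ * ‖ftPt f ξ‖ ^ 2

/-- The quartic energy correction
`E₁(f) = (2π)⁻¹ ∫ b₄^κ f̂(ξ₁) f̂(ξ₂) conj(f̂(ξ₃)) conj(f̂(ξ₄)) dξ₁ dξ₂ dξ₃`, `ξ₄ = ξ₁+ξ₂-ξ₃`. -/
noncomputable def E1 (κ : ℝ) (a : ℝ → ℝ) (f : ℝ → ℂ) : ℂ :=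
  ((2 * Real.pi : ℝ)⁻¹ : ℂ) * ∫ p : ℝ × ℝ × ℝ,
    (b4k κ a p.1 p.2.1 p.2.2 (p.1 + p.2.1 - p.2.2) : ℂ) * ftPt f p.1 * ftPt f p.2.1 *
      (starRingEnd ℂ) (ftPt f p.2.2) * (starRingEnd ℂ) (ftPt f (p.1 + p.2.1 - p.2.2))

open scoped FourierTransform SchwartzMap ComplexConjugate

/-! ### The unitary Fourier transform on Schwartz space -/


lemma fourierWeight_pos : 0 < fourierWeight := by
  unfold fourierWeight; positivity

lemma fourierWeight_sq : fourierWeight ^ 2 = (2 * Real.pi)⁻¹ := by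
  unfold fourierWeight
  rw [inv_pow, Real.sq_sqrt (by positivity)]

lemma ftPt_eq (f : 𝓢(ℝ, ℂ)) (ξ : ℝ) :
    ftPt (fun x => f x) ξ = (fourierWeight : ℂ) * (𝓕 f : 𝓢(ℝ, ℂ)) (ξ / (2 * Real.pi)) := by
  unfold ftPt
  rw [SchwartzMap.fourier_coe, Real.fourier_eq']
  congr 2
  ext x
  rw [smul_eq_mul]
  congr 2
  have : (Real.pi : ℂ) ≠ 0 := by exact_mod_cast Real.pi_ne_zero
  simp
  field_simp

lemma ftPt_continuous (f : 𝓢(ℝ, ℂ)) : Continuous (ftPt (fun x => f x)) := by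
  have : ftPt (fun x => f x) =
      fun ξ => (fourierWeight : ℂ) * (𝓕 f : 𝓢(ℝ, ℂ)) (ξ / (2 * Real.pi)) := by
    ext ξ; exact ftPt_eq f ξ
  rw [this]
  have := (𝓕 f : 𝓢(ℝ, ℂ)).continuous
  fun_prop

/-- A continuous function of the Schwartz function `f` that bounds `(1 + ξ²) |f̂(ξ)|`. -/
noncomputable def decayBound (f : 𝓢(ℝ, ℂ)) : ℝ :=
  fourierWeight * (SchwartzMap.seminorm ℝ 0 0 (𝓕 f : 𝓢(ℝ, ℂ)) +
    (2 * Real.pi) ^ 2 * SchwartzMap.seminorm ℝ 2 0 (𝓕 f : 𝓢(ℝ, ℂ)))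

lemma decayBound_continuous : Continuous decayBound := by
  have h (k : ℕ) : Continuous (fun f : 𝓢(ℝ, ℂ) => SchwartzMap.seminorm ℝ k 0 f) :=
    (schwartz_withSeminorms ℝ ℝ ℂ).continuous_seminorm (k, 0)
  have hF : Continuous (fun f : 𝓢(ℝ, ℂ) => (𝓕 f : 𝓢(ℝ, ℂ))) :=
    (SchwartzMap.fourierTransformCLM ℂ).continuous
  unfold decayBound
  exact continuous_const.mul (((h 0).comp hF).add (continuous_const.mul ((h 2).comp hF)))

lemma ftPt_decay (f : 𝓢(ℝ, ℂ)) (ξ : ℝ) :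
    ‖ftPt (fun x => f x) ξ‖ ≤ decayBound f * (1 + ξ ^ 2)⁻¹ := by
  rw [← div_eq_mul_inv, le_div_iff₀ (by positivity), ftPt_eq, norm_mul, Complex.norm_real,
    Real.norm_of_nonneg fourierWeight_pos.le, mul_assoc]
  unfold decayBound
  refine mul_le_mul_of_nonneg_left ?_ fourierWeight_pos.le
  have h0 := SchwartzMap.norm_le_seminorm ℝ (𝓕 f : 𝓢(ℝ, ℂ)) (ξ / (2 * Real.pi))
  have h2 := SchwartzMap.norm_pow_mul_le_seminorm ℝ (𝓕 f : 𝓢(ℝ, ℂ)) 2 (ξ / (2 * Real.pi))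
  have hpi : (0 : ℝ) < 2 * Real.pi := by positivity
  have e : ξ ^ 2 = (2 * Real.pi) ^ 2 * ‖ξ / (2 * Real.pi)‖ ^ 2 := by
    rw [Real.norm_eq_abs, sq_abs]; field_simp
  rw [e]
  nlinarith [mul_le_mul_of_nonneg_left h2 (sq_nonneg (2 * Real.pi))]

/-- Evaluation of the Fourier transform at a frequency, as a continuous functional. -/
noncomputable def ftPtCLM (ξ : ℝ) : 𝓢(ℝ, ℂ) →L[ℝ] ℂ where
  toFun f := ftPt (fun x => f x) ξ
  map_add' f g := by
    rw [ftPt_eq, ftPt_eq, ftPt_eq, FourierTransform.fourier_add, add_apply, mul_add]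
  map_smul' c f := by
    rw [ftPt_eq, ftPt_eq, FourierTransform.fourier_smul, smul_apply, RingHom.id_apply,
      Complex.real_smul, Complex.real_smul]
    ring
  cont := by
    have hF : Continuous (fun f : 𝓢(ℝ, ℂ) => (𝓕 f : 𝓢(ℝ, ℂ))) :=
      (SchwartzMap.fourierTransformCLM ℂ).continuous
    have hE : Continuous (fun f : 𝓢(ℝ, ℂ) => f (ξ / (2 * Real.pi))) :=
      (BoundedContinuousFunction.lipschitz_eval_const (ξ / (2 * Real.pi))).continuous.comp
        (SchwartzMap.toBoundedContinuousFunctionCLM ℝ ℝ ℂ).continuous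
    simp only [ftPt_eq]
    exact continuous_const.mul (hE.comp hF)

lemma ftPt_hasDerivAt {U : ℝ → 𝓢(ℝ, ℂ)} {v : 𝓢(ℝ, ℂ)} {t : ℝ}
    (h : Tendsto (fun h : ℝ => h⁻¹ • (U (t + h) - U t)) (𝓝[≠] (0 : ℝ)) (𝓝 v)) (ξ : ℝ) :
    HasDerivAt (fun τ => ftPt (fun x => U τ x) ξ) (ftPt (fun x => v x) ξ) t := by
  rw [hasDerivAt_iff_tendsto_slope_zero]
  have := ((ftPtCLM ξ).continuous.tendsto v).comp h
  refine this.congr fun h => ?_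
  simp only [Function.comp, map_smul, map_sub]
  rfl

/-- Differentiability in the topology of Schwartz space implies continuity. It is derived from the
limit of difference quotients, because `HasDerivAt` requires a normed target. -/
lemma continuousAt_of_slope {U : ℝ → 𝓢(ℝ, ℂ)} {v : 𝓢(ℝ, ℂ)} {t : ℝ}
    (h : Tendsto (fun h : ℝ => h⁻¹ • (U (t + h) - U t)) (𝓝[≠] (0 : ℝ)) (𝓝 v)) :
    ContinuousAt U t := by
  have h1 : Tendsto (fun h : ℝ => h) (𝓝[≠] (0 : ℝ)) (𝓝 0) :=
    tendsto_nhdsWithin_of_tendsto_nhds tendsto_id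
  have h2 := (h1.smul h).add_const (U t)
  rw [zero_smul, zero_add] at h2
  have h3 : Tendsto (fun h : ℝ => U (t + h)) (𝓝[≠] (0 : ℝ)) (𝓝 (U t)) := by
    refine h2.congr' ?_
    filter_upwards [self_mem_nhdsWithin] with h hh
    rw [smul_inv_smul₀ hh, sub_add_cancel]
  have h4 : ContinuousAt (fun h : ℝ => U (t + h)) 0 := by
    rw [continuousAt_iff_punctured_nhds]; simpa using h3
  have h5 : ContinuousAt (fun τ => τ - t) t := by fun_prop
  have h6 : ContinuousAt ((fun h : ℝ => U (t + h)) ∘ fun τ => τ - t) t :=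
    ContinuousAt.comp (by simpa using h4) h5
  simpa [Function.comp_def] using h6

lemma ftPt_iteratedDeriv_two (f : 𝓢(ℝ, ℂ)) (ξ : ℝ) :
    ftPt (iteratedDeriv 2 (fun y => f y)) ξ = -((ξ ^ 2 : ℝ) : ℂ) * ftPt (fun x => f x) ξ := by
  have e : iteratedDeriv 2 (fun y => f y) =
      fun x => SchwartzMap.derivCLM ℝ ℂ (SchwartzMap.derivCLM ℝ ℂ f) x := by
    ext x
    rw [iteratedDeriv_succ, iteratedDeriv_one]
    rfl
  have h1 (g : 𝓢(ℝ, ℂ)) (η : ℝ) : (𝓕 (SchwartzMap.derivCLM ℝ ℂ g) : 𝓢(ℝ, ℂ)) η =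
      (2 * Real.pi * Complex.I * η) * (𝓕 g : 𝓢(ℝ, ℂ)) η := by
    have := Real.fourier_deriv g.integrable g.differentiable
      (SchwartzMap.derivCLM ℝ ℂ g).integrable
    have e : ⇑(SchwartzMap.derivCLM ℝ ℂ g) = deriv g := rfl
    rw [SchwartzMap.fourier_coe, SchwartzMap.fourier_coe, e]
    simpa using congrFun this η
  rw [e, ftPt_eq, ftPt_eq, h1, h1]
  have : (Real.pi : ℂ) ≠ 0 := by exact_mod_cast Real.pi_ne_zero
  push_cast
  field_simp
  rw [Complex.I_sq]
  ring

/-! ### The multiplier `b₄` -/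

lemma deriv_second_bound {s ε : ℝ} (hsε : s + ε ≤ 0) {Ck : ℕ → ℝ} {a : ℝ → ℝ}
    (ha : IsSymbolS s ε Ck a) (ξ : ℝ) : |deriv (deriv a) ξ| ≤ |Ck 2| := by
  obtain ⟨-, hpos, -, hder, hsz, -⟩ := ha
  have h := hder 2 ξ
  rw [iteratedDeriv_succ, iteratedDeriv_one] at h
  have h1 : (1 : ℝ) ≤ 1 + ξ ^ 2 := by nlinarith [sq_nonneg ξ]
  have ha1 : a ξ ≤ 1 := (hsz ξ).2.trans (Real.rpow_le_one_of_one_le_of_nonpos h1 hsε)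
  have hr : (1 + ξ ^ 2) ^ (-((2 : ℕ) : ℝ) / 2) ≤ 1 :=
    Real.rpow_le_one_of_one_le_of_nonpos h1 (by norm_num)
  have hr0 : 0 ≤ (1 + ξ ^ 2) ^ (-((2 : ℕ) : ℝ) / 2) := by positivity
  refine h.trans ?_
  calc _ ≤ |Ck 2| * (a ξ * (1 + ξ ^ 2) ^ (-((2 : ℕ) : ℝ) / 2)) := by
        rw [mul_assoc]
        exact mul_le_mul_of_nonneg_right (le_abs_self _) (mul_nonneg (hpos ξ).le hr0)
    _ ≤ |Ck 2| * 1 := by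
        refine mul_le_mul_of_nonneg_left ?_ (abs_nonneg _)
        exact mul_le_one₀ ha1 hr0 hr
    _ = _ := mul_one _

/-- Two applications of the mean value inequality bound the mixed second difference. -/
lemma second_difference_le {a : ℝ → ℝ} (ha : ContDiff ℝ (⊤ : ℕ∞) a) {K : ℝ}
    (hK : ∀ ξ, |deriv (deriv a) ξ| ≤ K) (x h k : ℝ) :
    |a x - a (x - h) - (a (x - k) - a (x - k - h))| ≤ K * |h| * |k| := by
  have hd : Differentiable ℝ a := ha.differentiable (by simp)
  have hd2 : Differentiable ℝ (deriv a) :=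
    (ha.iterate_deriv 1).differentiable (by simp)
  have h1 (y z : ℝ) : |deriv a y - deriv a z| ≤ K * |y - z| :=
    convex_univ.norm_image_sub_le_of_norm_deriv_le (f := deriv a) (fun x _ => hd2 x)
      (fun x _ => hK x) (mem_univ z) (mem_univ y)
  have h2 (y : ℝ) : HasDerivAt (fun y => a y - a (y - h)) (deriv a y - deriv a (y - h)) y := by
    refine (hd y).hasDerivAt.sub ?_
    simpa using ((hd (y - h)).hasDerivAt.comp_sub_const y h)
  have h3 := convex_univ.norm_image_sub_le_of_norm_hasDerivWithin_le
    (f := fun y => a y - a (y - h)) (C := K * |h|)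
    (fun y _ => (h2 y).hasDerivWithinAt)
    (fun y _ => by simpa using h1 y (y - h)) (mem_univ (x - k)) (mem_univ x)
  simpa using h3

/-- On the hyperplane the numerator of `b₄` is the second difference of `a` at `x` with increments
`x - z` and `z - y`, and the denominator is `2 (x - z) (z - y)`. -/
lemma b4k_bound {κ : ℝ} (hκ : κ = 1 ∨ κ = -1) {s ε : ℝ} (hsε : s + ε ≤ 0) {Ck : ℕ → ℝ}
    {a : ℝ → ℝ} (ha : IsSymbolS s ε Ck a) (x y z : ℝ) :
    |b4k κ a x y z (x + y - z)| ≤ |Ck 2| := by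
  have hκ' : |κ| = 1 := by rcases hκ with rfl | rfl <;> simp
  unfold b4k
  split_ifs with h0
  · simp
  have e : x ^ 2 + y ^ 2 - z ^ 2 - (x + y - z) ^ 2 = 2 * (x - z) * (z - y) := by ring
  have hd := second_difference_le ha.1 (deriv_second_bound hsε ha) x (x - z) (z - y)
  have e2 : a x - a (x - (x - z)) - (a (x - (z - y)) - a (x - (z - y) - (x - z))) =
      a x + a y - a z - a (x + y - z) := by
    rw [show x - (x - z) = z by ring, show x - (z - y) - (x - z) = y by ring,
      show x - (z - y) = x + y - z by ring]
    ring
  rw [e2] at hd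
  rw [abs_mul, abs_div, abs_div, hκ', e]
  rw [e] at h0
  have hp : 0 < |2 * (x - z) * (z - y)| := abs_pos.mpr h0
  rw [abs_mul, abs_mul] at hp ⊢
  have : |a x + a y - a z - a (x + y - z)| / (|(2 : ℝ)| * |x - z| * |z - y|) ≤ |Ck 2| := by
    rw [div_le_iff₀ hp]
    rw [abs_two] at hp ⊢
    nlinarith [abs_nonneg (Ck 2), mul_nonneg (mul_nonneg (abs_nonneg (Ck 2)) (abs_nonneg (x - z)))
      (abs_nonneg (z - y))]
  rw [abs_two] at this ⊢
  nlinarith [abs_nonneg (Ck 2)]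

/-- The convention `b₄ = 0` on the resonant set is harmless here: there both sides vanish. -/
lemma b4k_mul_resonance (κ : ℝ) (a : ℝ → ℝ) (x y z : ℝ) :
    b4k κ a x y z (x + y - z) * (x ^ 2 + y ^ 2 - z ^ 2 - (x + y - z) ^ 2) =
      κ / 2 * (a x + a y - a z - a (x + y - z)) := by
  unfold b4k
  split_ifs with h0
  · have e : x ^ 2 + y ^ 2 - z ^ 2 - (x + y - z) ^ 2 = 2 * ((x - z) * (z - y)) := by ring
    rw [e] at h0
    -- On the resonant set `{ξ₁, ξ₂} = {ξ₃, ξ₄}`, so the numerator vanishes too.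
    rcases mul_eq_zero.mp ((mul_eq_zero.mp h0).resolve_left two_ne_zero) with h | h
    · obtain rfl : x = z := by linarith
      simp
    · obtain rfl : z = y := by linarith
      simp
  · field_simp

lemma b4k_swap12 (κ : ℝ) (a : ℝ → ℝ) (x y z w : ℝ) : b4k κ a y x z w = b4k κ a x y z w := by
  unfold b4k
  rw [add_comm (y ^ 2), add_comm (a y)]

lemma b4k_swap34 (κ : ℝ) (a : ℝ → ℝ) (x y z w : ℝ) : b4k κ a x y w z = b4k κ a x y z w := by
  unfold b4k
  rw [sub_right_comm (x ^ 2 + y ^ 2), sub_right_comm (a x + a y)]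

lemma b4k_swap_pairs (κ : ℝ) (a : ℝ → ℝ) (x y z w : ℝ) : b4k κ a z w x y = b4k κ a x y z w := by
  unfold b4k
  rw [show z ^ 2 + w ^ 2 - x ^ 2 - y ^ 2 = -(x ^ 2 + y ^ 2 - z ^ 2 - w ^ 2) by ring,
    show a z + a w - a x - a y = -(a x + a y - a z - a w) by ring, neg_div_neg_eq]
  simp only [neg_eq_zero]

lemma b4k_measurable {κ : ℝ} {a : ℝ → ℝ} (ha : Continuous a) :
    Measurable (fun p : ℝ × ℝ × ℝ => b4k κ a p.1 p.2.1 p.2.2 (p.1 + p.2.1 - p.2.2)) := by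
  unfold b4k
  refine Measurable.ite (measurableSet_eq_fun (by fun_prop) (by fun_prop)) measurable_const ?_
  have := ha.measurable
  fun_prop

/-! ### Quartic forms on the hyperplane and their symmetries -/

/-- The integrand of `quadForm`. -/
noncomputable def quadTerm (m : ℝ → ℝ → ℝ → ℝ → ℝ) (g₁ g₂ g₃ g₄ : ℝ → ℂ) (p : ℝ × ℝ × ℝ) : ℂ :=
  (m p.1 p.2.1 p.2.2 (p.1 + p.2.1 - p.2.2) : ℂ) * g₁ p.1 * g₂ p.2.1 *
    conj (g₃ p.2.2) * conj (g₄ (p.1 + p.2.1 - p.2.2))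

/-- The quadrilinear form with multiplier `m` on the hyperplane `ξ₁ + ξ₂ = ξ₃ + ξ₄`,
parametrized by `(ξ₁, ξ₂, ξ₃)`; it is conjugate-linear in the last two arguments. -/
noncomputable def quadForm (m : ℝ → ℝ → ℝ → ℝ → ℝ) (g₁ g₂ g₃ g₄ : ℝ → ℂ) : ℂ :=
  ∫ p : ℝ × ℝ × ℝ, quadTerm m g₁ g₂ g₃ g₄ p

lemma measurePreserving_snd_third :
    MeasurePreserving (fun p : ℝ × ℝ × ℝ => (p.1, p.2.2, p.2.1)) volume volume :=
  (MeasurePreserving.id volume).prod Measure.measurePreserving_swap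

lemma measurePreserving_rotate :
    MeasurePreserving (fun p : ℝ × ℝ × ℝ => (p.2.1, p.2.2, p.1)) volume volume :=
  (volume_preserving_prodAssoc (α₁ := ℝ) (β₁ := ℝ) (γ₁ := ℝ)).comp
    (Measure.measurePreserving_swap (μ := (volume : Measure ℝ)) (ν := (volume : Measure (ℝ × ℝ))))

/-- The exchange `ξ₃ ↔ ξ₄` preserves the measure: it is a shear of the last coordinate composed
with a reflection of it. -/
lemma measurePreserving_third_fourth :
    MeasurePreserving (fun p : ℝ × ℝ × ℝ => (p.1, p.2.1, p.1 + p.2.1 - p.2.2)) volume volume := by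
  refine (MeasurePreserving.id volume).skew_product
    (g := fun (x : ℝ) (q : ℝ × ℝ) => (q.1, x + q.1 - q.2)) (by fun_prop) (ae_of_all _ fun x => ?_)
  refine ((MeasurePreserving.id (volume : Measure ℝ)).skew_product
    (μc := (volume : Measure ℝ)) (μd := (volume : Measure ℝ))
    (g := fun (y z : ℝ) => x + y - z) (by fun_prop) (ae_of_all _ fun y => ?_)).map_eq
  exact (Measure.measurePreserving_sub_left volume (x + y)).map_eq

lemma measurePreserving_fst_snd :
    MeasurePreserving (fun p : ℝ × ℝ × ℝ => (p.2.1, p.1, p.2.2)) volume volume :=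
  measurePreserving_snd_third.comp measurePreserving_rotate

/-- The exchange `(ξ₁, ξ₂) ↔ (ξ₃, ξ₄)` of the two pairs of frequencies preserves the measure:
it is a shear composed with permutations of the coordinates. -/
lemma measurePreserving_swap_pairs :
    MeasurePreserving (fun p : ℝ × ℝ × ℝ => (p.2.2, p.1 + p.2.1 - p.2.2, p.1)) volume volume := by
  have hs : MeasurePreserving (fun p : ℝ × ℝ × ℝ => (p.1, p.2.1, p.1 + p.2.2 - p.2.1))
      volume volume := by
    refine (MeasurePreserving.id volume).skew_product
      (g := fun (x : ℝ) (q : ℝ × ℝ) => (q.1, x + q.2 - q.1)) (by fun_prop)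
      (ae_of_all _ fun x => ?_)
    refine ((MeasurePreserving.id (volume : Measure ℝ)).skew_product
      (μc := (volume : Measure ℝ)) (μd := (volume : Measure ℝ))
      (g := fun (y z : ℝ) => x + z - y) (by fun_prop) (ae_of_all _ fun y => ?_)).map_eq
    simpa only [add_sub_right_comm] using
      (measurePreserving_add_left (volume : Measure ℝ) (x - y)).map_eq
  exact measurePreserving_rotate.comp (hs.comp measurePreserving_snd_third)

lemma integral_comp_involutive {T : ℝ × ℝ × ℝ → ℝ × ℝ × ℝ} (hT : MeasurePreserving T)
    (hi : Function.Involutive T) (f : ℝ × ℝ × ℝ → ℂ) : ∫ p, f (T p) = ∫ p, f p :=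
  hT.integral_comp (MeasurableEquiv.ofInvolutive T hi hT.measurable).measurableEmbedding f

lemma quadForm_swap12 {m : ℝ → ℝ → ℝ → ℝ → ℝ} (g₁ g₂ g₃ g₄ : ℝ → ℂ) :
    quadForm m g₁ g₂ g₃ g₄ = quadForm (fun x y z w => m y x z w) g₂ g₁ g₃ g₄ := by
  unfold quadForm quadTerm
  rw [← integral_comp_involutive measurePreserving_fst_snd (fun _ => rfl)]
  refine integral_congr_ae (ae_of_all _ fun p => ?_)
  simp only [add_comm p.2.1 p.1]
  ring

lemma quadForm_swap34 {m : ℝ → ℝ → ℝ → ℝ → ℝ} (g₁ g₂ g₃ g₄ : ℝ → ℂ) :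
    quadForm m g₁ g₂ g₃ g₄ = quadForm (fun x y z w => m x y w z) g₁ g₂ g₄ g₃ := by
  unfold quadForm quadTerm
  rw [← integral_comp_involutive measurePreserving_third_fourth (fun p => by simp)]
  refine integral_congr_ae (ae_of_all _ fun p => ?_)
  simp only [sub_sub_cancel]
  ring

lemma quadForm_conj {m : ℝ → ℝ → ℝ → ℝ → ℝ} (g₁ g₂ g₃ g₄ : ℝ → ℂ) :
    conj (quadForm m g₁ g₂ g₃ g₄) = quadForm (fun x y z w => m z w x y) g₃ g₄ g₁ g₂ := by
  unfold quadForm quadTerm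
  rw [← integral_conj, ← integral_comp_involutive measurePreserving_swap_pairs
    (fun p => by ext <;> simp)]
  refine integral_congr_ae (ae_of_all _ fun p => ?_)
  simp only [show p.2.2 + (p.1 + p.2.1 - p.2.2) - p.1 = p.2.1 by ring, map_mul, Complex.conj_conj,
    Complex.conj_ofReal]
  ring

/-! ### Decay and absolute integrability -/

/-- Continuity together with the quantitative decay `|g(ξ)| ≤ C (1 + ξ²)⁻¹`. -/
structure Decays (C : ℝ) (g : ℝ → ℂ) : Prop where
  cont : Continuous g
  bound : ∀ ξ, ‖g ξ‖ ≤ C * (1 + ξ ^ 2)⁻¹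

/-- The multiplier `m`, restricted to `ξ₁ + ξ₂ = ξ₃ + ξ₄`, is measurable and bounded by `B`. -/
structure BoundedMultiplier (B : ℝ) (m : ℝ → ℝ → ℝ → ℝ → ℝ) : Prop where
  meas : Measurable fun p : ℝ × ℝ × ℝ => m p.1 p.2.1 p.2.2 (p.1 + p.2.1 - p.2.2)
  bound : ∀ p : ℝ × ℝ × ℝ, |m p.1 p.2.1 p.2.2 (p.1 + p.2.1 - p.2.2)| ≤ B

lemma Decays.nonneg {C : ℝ} {g : ℝ → ℂ} (h : Decays C g) : 0 ≤ C := by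
  simpa using (norm_nonneg _).trans (h.bound 0)

lemma Decays.bound' {C : ℝ} {g : ℝ → ℂ} (h : Decays C g) (ξ : ℝ) : ‖g ξ‖ ≤ C := by
  refine (h.bound ξ).trans (mul_le_of_le_one_right h.nonneg (inv_le_one_of_one_le₀ ?_))
  nlinarith [sq_nonneg ξ]

lemma Decays.mono {C C' : ℝ} {g : ℝ → ℂ} (h : Decays C g) (hC : C ≤ C') : Decays C' g :=
  ⟨h.cont, fun ξ => (h.bound ξ).trans (mul_le_mul_of_nonneg_right hC (by positivity))⟩

lemma Decays.integrable {C : ℝ} {g : ℝ → ℂ} (h : Decays C g) : Integrable g :=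
  (integrable_inv_one_add_sq.const_mul C).mono' h.cont.aestronglyMeasurable
    (ae_of_all _ h.bound)

lemma ftPt_decays (f : 𝓢(ℝ, ℂ)) : Decays (decayBound f) (ftPt fun x => f x) :=
  ⟨ftPt_continuous f, ftPt_decay f⟩

/-- The integrable weight dominating all quadrilinear integrands. -/
noncomputable def tripleWeight (p : ℝ × ℝ × ℝ) : ℝ :=
  (1 + p.1 ^ 2)⁻¹ * ((1 + p.2.1 ^ 2)⁻¹ * (1 + p.2.2 ^ 2)⁻¹)

lemma tripleWeight_integrable : Integrable tripleWeight :=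
  integrable_inv_one_add_sq.mul_prod
    (integrable_inv_one_add_sq.mul_prod integrable_inv_one_add_sq)

lemma quadTerm_bound {B C₁ C₂ C₃ C₄ : ℝ} {m : ℝ → ℝ → ℝ → ℝ → ℝ} (hm : BoundedMultiplier B m)
    {g₁ g₂ g₃ g₄ : ℝ → ℂ} (h₁ : Decays C₁ g₁) (h₂ : Decays C₂ g₂) (h₃ : Decays C₃ g₃)
    (h₄ : Decays C₄ g₄) (p : ℝ × ℝ × ℝ) :
    ‖quadTerm m g₁ g₂ g₃ g₄ p‖ ≤ B * C₁ * C₂ * C₃ * C₄ * tripleWeight p := by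
  have hB : 0 ≤ B := (abs_nonneg _).trans (hm.bound 0)
  have := h₁.nonneg
  have := h₂.nonneg
  have := h₃.nonneg
  have := h₄.nonneg
  unfold quadTerm
  simp only [norm_mul, RCLike.norm_conj, Complex.norm_real, Real.norm_eq_abs]
  calc _ ≤ B * (C₁ * (1 + p.1 ^ 2)⁻¹) * (C₂ * (1 + p.2.1 ^ 2)⁻¹) * (C₃ * (1 + p.2.2 ^ 2)⁻¹) *
        C₄ := by
        gcongr
        · exact hm.bound p
        · exact h₁.bound _
        · exact h₂.bound _
        · exact h₃.bound _
        · exact h₄.bound' _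
    _ = _ := by unfold tripleWeight; ring

lemma quadTerm_measurable {B : ℝ} {m : ℝ → ℝ → ℝ → ℝ → ℝ} (hm : BoundedMultiplier B m)
    {g₁ g₂ g₃ g₄ : ℝ → ℂ} (h₁ : Continuous g₁) (h₂ : Continuous g₂) (h₃ : Continuous g₃)
    (h₄ : Continuous g₄) : AEStronglyMeasurable (quadTerm m g₁ g₂ g₃ g₄) volume := by
  have h := Complex.measurable_ofReal.comp hm.meas
  have c₁ : Measurable fun p : ℝ × ℝ × ℝ => g₁ p.1 := by fun_prop
  have c₂ : Measurable fun p : ℝ × ℝ × ℝ => g₂ p.2.1 := by fun_prop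
  have c₃ : Measurable fun p : ℝ × ℝ × ℝ => conj (g₃ p.2.2) :=
    (Complex.continuous_conj.comp (h₃.comp (by fun_prop))).measurable
  have c₄ : Measurable fun p : ℝ × ℝ × ℝ => conj (g₄ (p.1 + p.2.1 - p.2.2)) :=
    (Complex.continuous_conj.comp (h₄.comp (by fun_prop))).measurable
  exact ((((h.mul c₁).mul c₂).mul c₃).mul c₄).aestronglyMeasurable

lemma quadTerm_integrable {B C₁ C₂ C₃ C₄ : ℝ} {m : ℝ → ℝ → ℝ → ℝ → ℝ}
    (hm : BoundedMultiplier B m) {g₁ g₂ g₃ g₄ : ℝ → ℂ} (h₁ : Decays C₁ g₁) (h₂ : Decays C₂ g₂)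
    (h₃ : Decays C₃ g₃) (h₄ : Decays C₄ g₄) : Integrable (quadTerm m g₁ g₂ g₃ g₄) :=
  (tripleWeight_integrable.const_mul _).mono'
    (quadTerm_measurable hm h₁.cont h₂.cont h₃.cont h₄.cont)
    (ae_of_all _ (quadTerm_bound hm h₁ h₂ h₃ h₄))

/-! ### Differentiation under the integral -/

/-- The product rule for the quartic form along a curve that is differentiable at each frequency,
with uniform decay of the curve and of its velocity. -/
lemma quadForm_hasDerivAt {B C : ℝ} {m : ℝ → ℝ → ℝ → ℝ → ℝ} (hm : BoundedMultiplier B m)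
    {g g' : ℝ → ℝ → ℂ} {t : ℝ} {S : Set ℝ} (hS : S ∈ 𝓝 t)
    (hg : ∀ τ ∈ S, Decays C (g τ)) (hg' : ∀ τ ∈ S, Decays C (g' τ))
    (hd : ∀ τ ∈ S, ∀ ξ, HasDerivAt (fun τ => g τ ξ) (g' τ ξ) τ) :
    HasDerivAt (fun τ => quadForm m (g τ) (g τ) (g τ) (g τ))
      (quadForm m (g' t) (g t) (g t) (g t) + quadForm m (g t) (g' t) (g t) (g t) +
        quadForm m (g t) (g t) (g' t) (g t) + quadForm m (g t) (g t) (g t) (g' t)) t := by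
  have ht := mem_of_mem_nhds hS
  have hG := hg t ht
  have hG' := hg' t ht
  have i₁ := quadTerm_integrable hm hG' hG hG hG
  have i₂ := quadTerm_integrable hm hG hG' hG hG
  have i₃ := quadTerm_integrable hm hG hG hG' hG
  have i₄ := quadTerm_integrable hm hG hG hG hG'
  have key := (hasDerivAt_integral_of_dominated_loc_of_deriv_le (μ := volume) (x₀ := t) (s := S)
    (F := fun τ p => quadTerm m (g τ) (g τ) (g τ) (g τ) p)
    (F' := fun τ p => quadTerm m (g' τ) (g τ) (g τ) (g τ) p +
      quadTerm m (g τ) (g' τ) (g τ) (g τ) p + quadTerm m (g τ) (g τ) (g' τ) (g τ) p +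
      quadTerm m (g τ) (g τ) (g τ) (g' τ) p)
    (bound := fun p => 4 * (B * C * C * C * C * tripleWeight p)) hS ?_
    (quadTerm_integrable hm hG hG hG hG) (((i₁.add i₂).add i₃).add i₄).aestronglyMeasurable
    ?_ ((tripleWeight_integrable.const_mul _).const_mul _) ?_).2
  · refine key.congr_deriv ?_
    unfold quadForm
    rw [← integral_add' i₁ i₂, ← integral_add' (i₁.add i₂) i₃,
      ← integral_add' ((i₁.add i₂).add i₃) i₄]
    rfl
  · filter_upwards [hS] with τ hτ
    exact (quadTerm_integrable hm (hg τ hτ) (hg τ hτ) (hg τ hτ) (hg τ hτ)).aestronglyMeasurable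
  · refine ae_of_all _ fun p τ hτ => ?_
    have h := hg τ hτ
    have h' := hg' τ hτ
    have b₁ := quadTerm_bound hm h' h h h p
    have b₂ := quadTerm_bound hm h h' h h p
    have b₃ := quadTerm_bound hm h h h' h p
    have b₄ := quadTerm_bound hm h h h h' p
    refine (norm_add_le _ _).trans ?_
    refine (add_le_add_left ((norm_add_le _ _).trans
      (add_le_add_left (norm_add_le _ _) _)) _).trans ?_
    linarith
  · refine ae_of_all _ fun p τ hτ => ?_
    have d := hd τ hτ
    have := (((d p.1).const_mul (m p.1 p.2.1 p.2.2 (p.1 + p.2.1 - p.2.2) : ℂ)).mul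
      (d p.2.1)).mul (d p.2.2).star |>.mul (d (p.1 + p.2.1 - p.2.2)).star
    refine this.congr_deriv ?_
    simp only [quadTerm, starRingEnd_apply, Pi.mul_apply]
    ring

/-- The quadratic energy may be differentiated under the integral sign. -/
lemma energy_hasDerivAt {C : ℝ} {a : ℝ → ℝ} (ha : Continuous a) (ha0 : ∀ ξ, 0 < a ξ)
    (ha1 : ∀ ξ, a ξ ≤ 1) {g g' : ℝ → ℝ → ℂ} {t : ℝ} {S : Set ℝ} (hS : S ∈ 𝓝 t)
    (hg : ∀ τ ∈ S, Decays C (g τ)) (hg' : ∀ τ ∈ S, Decays C (g' τ))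
    (hd : ∀ τ ∈ S, ∀ ξ, HasDerivAt (fun τ => g τ ξ) (g' τ ξ) τ) :
    HasDerivAt (fun τ => ∫ ξ, a ξ * ‖g τ ξ‖ ^ 2)
      (∫ ξ, a ξ * (2 * (conj (g t ξ) * g' t ξ).re)) t := by
  have ht := mem_of_mem_nhds hS
  have hC := (hg t ht).nonneg
  have bd {z w : ℝ → ℂ} (hz : Decays C z) (hw : Decays C w) (ξ : ℝ) :
      |a ξ| * (‖z ξ‖ * ‖w ξ‖) ≤ C * C * (1 + ξ ^ 2)⁻¹ := by
    have := hz.bound ξ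
    have := hw.bound' ξ
    calc _ ≤ 1 * (C * (1 + ξ ^ 2)⁻¹ * C) := by
          gcongr
          rw [abs_of_pos (ha0 ξ)]; exact ha1 ξ
      _ = _ := by ring
  have cont {τ} (hτ : τ ∈ S) : Continuous fun ξ => a ξ * ‖g τ ξ‖ ^ 2 := by
    have := (hg τ hτ).cont
    fun_prop
  refine (hasDerivAt_integral_of_dominated_loc_of_deriv_le (μ := volume) (x₀ := t) (s := S)
    (F := fun τ ξ => a ξ * ‖g τ ξ‖ ^ 2)
    (F' := fun τ ξ => a ξ * (2 * (conj (g τ ξ) * g' τ ξ).re))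
    (bound := fun ξ => 2 * (C * C * (1 + ξ ^ 2)⁻¹)) hS ?_ ?_ ?_ ?_
    ((integrable_inv_one_add_sq.const_mul _).const_mul _) ?_).2
  · filter_upwards [hS] with τ hτ using (cont hτ).aestronglyMeasurable
  · refine (integrable_inv_one_add_sq.const_mul (C * C)).mono' (cont ht).aestronglyMeasurable
      (ae_of_all _ fun ξ => ?_)
    have := bd (hg t ht) (hg t ht) ξ
    rwa [norm_mul, norm_pow, norm_norm, sq]
  · have h1 := (hg t ht).cont
    have h2 := (hg' t ht).cont
    have h3 : Continuous fun ξ => conj (g t ξ) := Complex.continuous_conj.comp h1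
    have h4 := Complex.continuous_re.comp (h3.mul h2)
    exact (ha.mul (continuous_const.mul h4)).aestronglyMeasurable
  · refine ae_of_all _ fun ξ τ hτ => ?_
    have h := Complex.abs_re_le_norm (conj (g τ ξ) * g' τ ξ)
    rw [norm_mul, RCLike.norm_conj] at h
    have := bd (hg τ hτ) (hg' τ hτ) ξ
    rw [norm_mul, norm_mul, Real.norm_two, Real.norm_eq_abs, Real.norm_eq_abs]
    nlinarith [mul_le_mul_of_nonneg_left h (abs_nonneg (a ξ))]
  · refine ae_of_all _ fun ξ τ hτ => ?_
    refine ((hd τ hτ ξ).norm_sq.const_mul (a ξ)).congr_deriv ?_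
    rw [mul_comm (conj (g τ ξ)), Complex.inner]

/-! ### The nonlinearity on the Fourier side -/

/-- Fourier inversion in the unitary normalization. -/
lemma ftPt_inversion (f : 𝓢(ℝ, ℂ)) (x : ℝ) :
    f x = (fourierWeight : ℂ) *
      ∫ ξ : ℝ, Complex.exp (Complex.I * x * ξ) * ftPt (fun x => f x) ξ := by
  have hinv : (𝓕⁻ (𝓕 f : 𝓢(ℝ, ℂ)) : 𝓢(ℝ, ℂ)) x = f x := by
    rw [FourierTransform.fourierInv_fourier_eq]
  rw [← hinv, SchwartzMap.fourierInv_coe, Real.fourierInv_eq']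
  have hπ : (Real.pi : ℂ) ≠ 0 := by exact_mod_cast Real.pi_ne_zero
  have hs : ∫ ξ : ℝ, Complex.exp (Complex.I * x * ξ) * ftPt (fun x => f x) ξ =
      |2 * Real.pi| • ∫ η : ℝ, (fourierWeight : ℂ) *
        (Complex.exp (((2 * Real.pi * inner ℝ η x : ℝ) : ℂ) * Complex.I) •
          (𝓕 f : 𝓢(ℝ, ℂ)) η) := by
    refine Eq.trans ?_ (Measure.integral_comp_div _ (2 * Real.pi))
    refine integral_congr_ae (ae_of_all _ fun ξ => ?_)
    simp only [ftPt_eq, smul_eq_mul]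
    rw [show ((2 * Real.pi * inner ℝ (ξ / (2 * Real.pi)) x : ℝ) : ℂ) * Complex.I =
      Complex.I * x * ξ by simp; field_simp]
    ring
  rw [hs, integral_const_mul]
  have hw : (fourierWeight : ℂ) ^ 2 = (2 * Real.pi : ℂ)⁻¹ := by exact_mod_cast fourierWeight_sq
  rw [abs_of_pos (by positivity), Complex.real_smul]
  have : ∀ I : ℂ, I =
      (fourierWeight : ℂ) * (((2 * Real.pi : ℝ) : ℂ) * ((fourierWeight : ℂ) * I)) := by
    intro I
    calc I = (2 * Real.pi : ℂ) * (fourierWeight : ℂ) ^ 2 * I := by rw [hw]; field_simp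
      _ = _ := by push_cast; ring
  exact this _

/-- The convolution formula for the Fourier transform of the cubic nonlinearity. -/
lemma ftPt_cubic (f : 𝓢(ℝ, ℂ)) (ξ : ℝ) :
    ftPt (fun x => ((‖f x‖ ^ 2 : ℝ) : ℂ) * f x) ξ =
      (fourierWeight : ℂ) ^ 2 * ∫ q : ℝ × ℝ, ftPt (fun x => f x) q.1 * ftPt (fun x => f x) q.2 *
        conj (ftPt (fun x => f x) (q.1 + q.2 - ξ)) := by
  set g := ftPt (fun x => f x) with hg
  have hgd : Decays (decayBound f) g := ftPt_decays f
  set K : ℝ → ℝ × ℝ → ℂ := fun x q =>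
    Complex.exp (-(Complex.I * x * ξ)) * (Complex.exp (Complex.I * x * q.1) * g q.1 *
      (Complex.exp (Complex.I * x * q.2) * g q.2)) * conj (f x) with hK
  -- Inversion is applied to the two unconjugated factors of `f * f * conj f`.
  have h1 (x : ℝ) : Complex.exp (-(Complex.I * x * ξ)) * (((‖f x‖ ^ 2 : ℝ) : ℂ) * f x) =
      (fourierWeight : ℂ) ^ 2 * ∫ q, K x q := by
    have e : ((‖f x‖ ^ 2 : ℝ) : ℂ) * f x = f x * f x * conj (f x) := by
      rw [Complex.ofReal_pow, ← Complex.mul_conj']; ring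
    rw [e]
    have hp := integral_prod_mul (μ := (volume : Measure ℝ)) (ν := (volume : Measure ℝ))
      (fun ξ : ℝ => Complex.exp (Complex.I * x * ξ) * g ξ)
      (fun ξ : ℝ => Complex.exp (Complex.I * x * ξ) * g ξ)
    have hK' : ∫ q, K x q = Complex.exp (-(Complex.I * x * ξ)) *
        ((∫ ξ : ℝ, Complex.exp (Complex.I * x * ξ) * g ξ) *
          ∫ ξ : ℝ, Complex.exp (Complex.I * x * ξ) * g ξ) * conj (f x) := by
      rw [← hp, ← integral_const_mul, ← integral_mul_const]
      rfl
    have hf := ftPt_inversion f x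
    rw [← hg] at hf
    rw [hK']
    generalize (∫ ξ : ℝ, Complex.exp (Complex.I * x * ξ) * g ξ) = I at hf
    generalize conj (f x) = c
    rw [hf]
    ring
  have h2 (q : ℝ × ℝ) : (fourierWeight : ℂ) * ∫ x, K x q =
      g q.1 * g q.2 * conj (g (q.1 + q.2 - ξ)) := by
    have e : conj (g (q.1 + q.2 - ξ)) = (fourierWeight : ℂ) *
        ∫ x : ℝ, conj (Complex.exp (-(Complex.I * x * (q.1 + q.2 - ξ : ℝ))) * f x) := by
      rw [integral_conj (𝕜 := ℂ), hg, ftPt, map_mul, Complex.conj_ofReal]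
    rw [e, mul_left_comm, ← integral_const_mul (g q.1 * g q.2)]
    congr 1
    refine integral_congr_ae (ae_of_all _ fun x => ?_)
    simp only [hK, map_mul, ← Complex.exp_conj]
    have e2 : Complex.exp (conj (-(Complex.I * x * (q.1 + q.2 - ξ : ℝ)))) =
        Complex.exp (-(Complex.I * x * ξ)) * (Complex.exp (Complex.I * x * q.1) *
          Complex.exp (Complex.I * x * q.2)) := by
      rw [← Complex.exp_add, ← Complex.exp_add]
      congr 1
      simp
      ring
    rw [e2]
    ring
  -- Absolute integrability of `K`, which justifies exchanging the `x` and frequency integrals.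
  have hKint : Integrable (Function.uncurry K) (volume.prod volume) := by
    have hb : Integrable (fun z : ℝ × ℝ × ℝ => ‖f z.1‖ * (‖g z.2.1‖ * ‖g z.2.2‖))
        (volume.prod volume) :=
      f.integrable.norm.mul_prod (hgd.integrable.norm.mul_prod hgd.integrable.norm)
    refine hb.mono' ?_ (ae_of_all _ fun z => ?_)
    · have h1 := hgd.cont
      have h2 := f.continuous
      have h3 : Continuous fun z : ℝ × ℝ × ℝ => conj (f z.1) :=
        Complex.continuous_conj.comp (h2.comp continuous_fst)
      have h4 : Continuous (Function.uncurry K) := by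
        simp only [hK, Function.uncurry_def]
        fun_prop
      exact h4.aestronglyMeasurable
    · have hn (y : ℝ) : ‖Complex.exp (Complex.I * z.1 * y)‖ = 1 := by
        rw [show Complex.I * z.1 * y = ((z.1 * y : ℝ) : ℂ) * Complex.I by push_cast; ring]
        exact Complex.norm_exp_ofReal_mul_I _
      have hn' : ‖Complex.exp (-(Complex.I * z.1 * ξ))‖ = 1 := by
        rw [Complex.exp_neg, norm_inv, hn, inv_one]
      simp only [hK, Function.uncurry, norm_mul, hn, hn', RCLike.norm_conj]
      exact le_of_eq (by ring)
  unfold ftPt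
  simp_rw [h1]
  rw [integral_const_mul, integral_integral_swap hKint, mul_left_comm, ← integral_const_mul]
  simp_rw [h2]

/-- Pairing the cubic nonlinearity with the solution gives the quartic form with multiplier
`a(ξ₃)`. -/
lemma cubic_pairing {a : ℝ → ℝ} {B : ℝ} (ha : BoundedMultiplier B fun _ _ z _ => a z)
    (f : 𝓢(ℝ, ℂ)) :
    ∫ ξ, (a ξ : ℂ) * (conj (ftPt (fun x => f x) ξ) *
        ftPt (fun x => ((‖f x‖ ^ 2 : ℝ) : ℂ) * f x) ξ) =
      (fourierWeight : ℂ) ^ 2 * quadForm (fun _ _ z _ => a z) (ftPt fun x => f x)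
        (ftPt fun x => f x) (ftPt fun x => f x) (ftPt fun x => f x) := by
  set g := ftPt (fun x => f x) with hg
  have hgd : Decays (decayBound f) g := ftPt_decays f
  -- The frequencies are relabelled so that the one carrying `a` becomes the outer variable.
  let e : ℝ × ℝ × ℝ ≃ᵐ ℝ × ℝ × ℝ := MeasurableEquiv.prodComm.trans MeasurableEquiv.prodAssoc
  have hemb : MeasurableEmbedding (fun p : ℝ × ℝ × ℝ => (p.2.1, p.2.2, p.1)) :=
    e.measurableEmbedding
  have hi := quadTerm_integrable ha hgd hgd hgd hgd
  have hi' : Integrable (fun p : ℝ × ℝ × ℝ =>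
      quadTerm (fun _ _ z _ => a z) g g g g (p.2.1, p.2.2, p.1)) (volume.prod volume) :=
    (measurePreserving_rotate.integrable_comp_emb hemb).mpr hi
  unfold quadForm
  rw [← measurePreserving_rotate.integral_comp hemb, Measure.volume_eq_prod,
    integral_prod _ hi', ← integral_const_mul]
  refine integral_congr_ae (ae_of_all _ fun ξ => ?_)
  simp only [ftPt_cubic, ← hg]
  rw [← mul_assoc, mul_left_comm, ← integral_const_mul]
  congr 1
  refine integral_congr_ae (ae_of_all _ fun q => ?_)
  simp only [quadTerm]
  ring

lemma symbol_le_one {s ε : ℝ} (hsε : s + ε ≤ 0) {Ck : ℕ → ℝ} {a : ℝ → ℝ}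
    (ha : IsSymbolS s ε Ck a) (ξ : ℝ) : a ξ ≤ 1 :=
  (ha.2.2.2.2.1 ξ).2.trans
    (Real.rpow_le_one_of_one_le_of_nonpos (by nlinarith [sq_nonneg ξ]) hsε)

/-- Uniform decay of the Fourier transforms of a `C¹` curve and of its velocity near a time. -/
lemma exists_uniform_decay {J : Set ℝ} (hJ : IsOpen J) {U V : ℝ → 𝓢(ℝ, ℂ)}
    (hU : ∀ t ∈ J, ContinuousAt U t) (hV : ContinuousOn V J) {t : ℝ} (ht : t ∈ J) :
    ∃ S ∈ 𝓝 t, ∃ C, S ⊆ J ∧ (∀ τ ∈ S, Decays C (ftPt fun x => U τ x)) ∧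
      ∀ τ ∈ S, Decays C (ftPt fun x => V τ x) := by
  have h1 : ∀ᶠ τ in 𝓝 t, decayBound (U τ) < decayBound (U t) + 1 :=
    (decayBound_continuous.continuousAt.comp (hU t ht)).eventually_lt_const (lt_add_one _)
  have h2 : ∀ᶠ τ in 𝓝 t, decayBound (V τ) < decayBound (V t) + 1 :=
    (decayBound_continuous.continuousAt.comp
      (hV.continuousAt (hJ.mem_nhds ht))).eventually_lt_const (lt_add_one _)
  refine ⟨_, (h1.and (h2.and (hJ.mem_nhds ht))),
    max (decayBound (U t) + 1) (decayBound (V t) + 1), fun τ hτ => hτ.2.2, fun τ hτ => ?_,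
    fun τ hτ => ?_⟩
  · exact (ftPt_decays _).mono (hτ.1.le.trans (le_max_left _ _))
  · exact (ftPt_decays _).mono (hτ.2.1.le.trans (le_max_right _ _))

lemma ftPt_smul (c : ℂ) (f : ℝ → ℂ) (ξ : ℝ) : ftPt (fun x => c * f x) ξ = c * ftPt f ξ := by
  unfold ftPt
  rw [mul_left_comm c, ← integral_const_mul c]
  simp only [mul_left_comm]

/-- The equation on the Fourier side, together with the decay of the transformed nonlinearity,
which is a Schwartz function by virtue of the equation itself. -/
lemma fourier_equation {κ : ℝ} (hκ : κ = 1 ∨ κ = -1) {u v : 𝓢(ℝ, ℂ)}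
    (h : ∀ x : ℝ, Complex.I * v x - iteratedDeriv 2 (fun y => u y) x +
        (κ : ℂ) * ((‖u x‖ ^ 2 : ℝ) : ℂ) * u x = 0) :
    (∃ C, Decays C (ftPt fun x => ((‖u x‖ ^ 2 : ℝ) : ℂ) * u x)) ∧
    (∃ C, Decays C (fun ξ : ℝ => ((ξ ^ 2 : ℝ) : ℂ) * ftPt (fun x => u x) ξ)) ∧
    ∀ ξ : ℝ, ftPt (fun x => v x) ξ = Complex.I * (((ξ ^ 2 : ℝ) : ℂ) * ftPt (fun x => u x) ξ) +
      Complex.I * κ * ftPt (fun x => ((‖u x‖ ^ 2 : ℝ) : ℂ) * u x) ξ := by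
  have hκ2 : (κ : ℂ) * κ = 1 := by rcases hκ with rfl | rfl <;> norm_num
  set d : 𝓢(ℝ, ℂ) := SchwartzMap.derivCLM ℝ ℂ (SchwartzMap.derivCLM ℝ ℂ u) with hd
  have ed : iteratedDeriv 2 (fun y => u y) = fun x => d x := by
    ext x
    rw [iteratedDeriv_succ, iteratedDeriv_one]
    rfl
  have hdξ (ξ : ℝ) : ftPt (fun x => d x) ξ = -((ξ ^ 2 : ℝ) : ℂ) * ftPt (fun x => u x) ξ := by
    rw [← ed, ftPt_iteratedDeriv_two]
  -- The equation expresses the nonlinearity through Schwartz functions; here `κ⁻¹ = κ` is used.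
  set n : 𝓢(ℝ, ℂ) := (κ : ℂ) • d - ((κ : ℂ) * Complex.I) • v with hn
  have en : (fun x => ((‖u x‖ ^ 2 : ℝ) : ℂ) * u x) = fun x => n x := by
    ext x
    have hx := h x
    rw [ed] at hx
    have : n x = (κ : ℂ) * d x - (κ : ℂ) * Complex.I * v x := rfl
    rw [this]
    linear_combination (κ : ℂ) * hx - ((‖u x‖ ^ 2 : ℝ) : ℂ) * u x * hκ2
  have hnξ (ξ : ℝ) : ftPt (fun x => n x) ξ =
      κ * ftPt (fun x => d x) ξ - κ * Complex.I * ftPt (fun x => v x) ξ := by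
    have h1 := map_sub (ftPtCLM ξ) ((κ : ℂ) • d) (((κ : ℂ) * Complex.I) • v)
    have h2 : ftPtCLM ξ ((κ : ℂ) • d) = _ := ftPt_smul κ (fun x => d x) ξ
    have h3 : ftPtCLM ξ (((κ : ℂ) * Complex.I) • v) = _ :=
      ftPt_smul (κ * Complex.I) (fun x => v x) ξ
    rw [h2, h3] at h1
    exact h1
  refine ⟨⟨_, by rw [en]; exact ftPt_decays n⟩, ⟨decayBound d, ?_, fun ξ => ?_⟩, fun ξ => ?_⟩
  · have := ftPt_continuous u
    fun_prop
  · have := ftPt_decay d ξ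
    rwa [hdξ, neg_mul, norm_neg] at this
  · rw [en, hnξ, hdξ]
    linear_combination (ftPt (fun x => v x) ξ * Complex.I ^ 2 +
      Complex.I * ((ξ ^ 2 : ℝ) : ℂ) * ftPt (fun x => u x) ξ) * hκ2 +
      ftPt (fun x => v x) ξ * Complex.I_sq

/-! ### Cancellation of the dispersive part -/

lemma quadForm_add_left {B C₁ C₁' C₂ C₃ C₄ : ℝ} {m : ℝ → ℝ → ℝ → ℝ → ℝ}
    (hm : BoundedMultiplier B m) {g₁ g₁' g₂ g₃ g₄ : ℝ → ℂ} (h₁ : Decays C₁ g₁)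
    (h₁' : Decays C₁' g₁') (h₂ : Decays C₂ g₂) (h₃ : Decays C₃ g₃) (h₄ : Decays C₄ g₄) (c c' : ℂ) :
    quadForm m (fun ξ => c * g₁ ξ + c' * g₁' ξ) g₂ g₃ g₄ =
      c * quadForm m g₁ g₂ g₃ g₄ + c' * quadForm m g₁' g₂ g₃ g₄ := by
  unfold quadForm
  rw [← integral_const_mul, ← integral_const_mul, ← integral_add
    ((quadTerm_integrable hm h₁ h₂ h₃ h₄).const_mul c)
    ((quadTerm_integrable hm h₁' h₂ h₃ h₄).const_mul c')]
  refine integral_congr_ae (ae_of_all _ fun p => ?_)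
  simp only [quadTerm]
  ring

section Resonance

variable {κ : ℝ} {a : ℝ → ℝ}

lemma quadForm_b4k_slot2 (g w : ℝ → ℂ) :
    quadForm (b4k κ a) g w g g = quadForm (b4k κ a) w g g g := by
  rw [quadForm_swap12]; simp only [b4k_swap12]

lemma quadForm_b4k_slot3 (g w : ℝ → ℂ) :
    quadForm (b4k κ a) g g w g = conj (quadForm (b4k κ a) w g g g) := by
  rw [quadForm_conj]; simp only [b4k_swap_pairs]

lemma quadForm_b4k_slot4 (g w : ℝ → ℂ) :
    quadForm (b4k κ a) g g g w = conj (quadForm (b4k κ a) w g g g) := by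
  rw [quadForm_swap34, ← quadForm_b4k_slot3]; simp only [b4k_swap34]

/-- The dispersive part of the derivative of the quartic energy collapses, by cancellation of the
denominator of `b₄` and by symmetrization, to a form with the single multiplier `a(ξ₃)`. -/
lemma resonance_cancellation {B C C' : ℝ} (hb : BoundedMultiplier B (b4k κ a))
    (ha : Continuous a) (ha' : ∀ ξ, |a ξ| ≤ 1) {g : ℝ → ℂ} (hg : Decays C g)
    (hw : Decays C' fun ξ : ℝ => ((ξ ^ 2 : ℝ) : ℂ) * g ξ) :
    (quadForm (b4k κ a) (fun ξ : ℝ => ((ξ ^ 2 : ℝ) : ℂ) * g ξ) g g g).im =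
      -(κ / 2) * (quadForm (fun _ _ z _ => a z) g g g g).im := by
  set w : ℝ → ℂ := fun ξ : ℝ => ((ξ ^ 2 : ℝ) : ℂ) * g ξ with hwd
  have m₁ : BoundedMultiplier 1 fun x _ _ _ => a x :=
    ⟨by have := ha.measurable; fun_prop, fun p => ha' _⟩
  have m₂ : BoundedMultiplier 1 fun _ y _ _ => a y :=
    ⟨by have := ha.measurable; fun_prop, fun p => ha' _⟩
  have m₃ : BoundedMultiplier 1 fun _ _ z _ => a z :=
    ⟨by have := ha.measurable; fun_prop, fun p => ha' _⟩
  have m₄ : BoundedMultiplier 1 fun _ _ _ w => a w :=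
    ⟨by have := ha.measurable; fun_prop, fun p => ha' _⟩
  have A₁ := quadTerm_integrable m₁ hg hg hg hg
  have A₂ := quadTerm_integrable m₂ hg hg hg hg
  have A₃ := quadTerm_integrable m₃ hg hg hg hg
  have A₄ := quadTerm_integrable m₄ hg hg hg hg
  have X₁ := quadTerm_integrable hb hw hg hg hg
  have X₂ := quadTerm_integrable hb hg hw hg hg
  have X₃ := quadTerm_integrable hb hg hg hw hg
  have X₄ := quadTerm_integrable hb hg hg hg hw
  have key : quadForm (b4k κ a) w g g g + quadForm (b4k κ a) g w g g -
      quadForm (b4k κ a) g g w g - quadForm (b4k κ a) g g g w =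
      (κ / 2 : ℂ) * (quadForm (fun x _ _ _ => a x) g g g g + quadForm (fun _ y _ _ => a y) g g g g -
        quadForm (fun _ _ z _ => a z) g g g g - quadForm (fun _ _ _ w => a w) g g g g) := by
    unfold quadForm
    rw [← integral_add' X₁ X₂, ← integral_sub' (X₁.add X₂) X₃,
      ← integral_sub' ((X₁.add X₂).sub X₃) X₄, ← integral_add' A₁ A₂,
      ← integral_sub' (A₁.add A₂) A₃, ← integral_sub' ((A₁.add A₂).sub A₃) A₄,
      ← integral_const_mul]
    refine integral_congr_ae (ae_of_all _ fun p => ?_)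
    have hr := congrArg Complex.ofReal (b4k_mul_resonance κ a p.1 p.2.1 p.2.2)
    push_cast at hr
    simp only [Pi.add_apply, Pi.sub_apply, quadTerm, hwd, map_mul, Complex.conj_ofReal]
    push_cast
    linear_combination g p.1 * g p.2.1 * conj (g p.2.2) * conj (g (p.1 + p.2.1 - p.2.2)) * hr
  have e₁ : quadForm (fun x _ _ _ => a x) g g g g =
      conj (quadForm (fun _ _ z _ => a z) g g g g) := by rw [quadForm_conj]
  have e₂ : quadForm (fun _ y _ _ => a y) g g g g =
      conj (quadForm (fun _ _ z _ => a z) g g g g) := by rw [quadForm_swap12, e₁]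
  have e₄ : quadForm (fun _ _ _ w => a w) g g g g =
      quadForm (fun _ _ z _ => a z) g g g g := by rw [quadForm_swap34]
  rw [quadForm_b4k_slot2, quadForm_b4k_slot3, quadForm_b4k_slot4, e₁, e₂, e₄] at key
  have := congrArg Complex.im key
  rw [show (κ / 2 : ℂ) = ((κ / 2 : ℝ) : ℂ) by push_cast; rfl, Complex.im_ofReal_mul] at this
  simp only [Complex.add_im, Complex.sub_im, Complex.conj_im] at this
  linarith

end Resonance

/-! ### The identity -/

/-- Modified energy identity: along a `C¹`-in-Schwartz-space solution of the cubic NLS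
on an open interval `J`, `E₁(u(t))` is real and
`d/dt [E₀(u(t)) + E₁(u(t))] = -(2κ/π) Im ∫ b₄^κ (|u|²u)^(ξ₁) û(ξ₂) conj(û(ξ₃)) conj(û(ξ₄))`. -/
theorem modified_energy_identity
    (κ : ℝ) (hκ : κ = 1 ∨ κ = -1)
    (s ε : ℝ) (hε : 0 < ε) (hsε : s + ε ≤ 0)
    (Ck : ℕ → ℝ) (a : ℝ → ℝ) (ha : IsSymbolS s ε Ck a)
    (J : Set ℝ) (hJopen : IsOpen J) (hJconn : J.OrdConnected)
    (U V : ℝ → SchwartzMap ℝ ℂ)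
    (hderiv : ∀ t ∈ J,
      Tendsto (fun h : ℝ => h⁻¹ • (U (t + h) - U t)) (𝓝[≠] (0 : ℝ)) (𝓝 (V t)))
    (hcont : ContinuousOn V J)
    (hPDE : ∀ t ∈ J, ∀ x : ℝ,
      Complex.I * V t x - iteratedDeriv 2 (fun y => U t y) x +
        (κ : ℂ) * ((‖U t x‖ ^ 2 : ℝ) : ℂ) * U t x = 0) :
    (∀ t ∈ J, (E1 κ a (fun x => U t x)).im = 0) ∧
      ∀ t ∈ J,
        HasDerivAt
          (fun τ : ℝ => E0 a (fun x => U τ x) + (E1 κ a (fun x => U τ x)).re)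
          (-(2 * κ / Real.pi) *
            (∫ p : ℝ × ℝ × ℝ,
              (b4k κ a p.1 p.2.1 p.2.2 (p.1 + p.2.1 - p.2.2) : ℂ) *
                ftPt (fun x => ((‖U t x‖ ^ 2 : ℝ) : ℂ) * U t x) p.1 *
                  ftPt (fun x => U t x) p.2.1 *
                    (starRingEnd ℂ) (ftPt (fun x => U t x) p.2.2) *
                      (starRingEnd ℂ)
                        (ftPt (fun x => U t x) (p.1 + p.2.1 - p.2.2))).im) t := by
  have hb : BoundedMultiplier |Ck 2| (b4k κ a) :=
    ⟨b4k_measurable ha.1.continuous, fun p => b4k_bound hκ hsε ha _ _ _⟩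
  have ha1 : ∀ ξ, |a ξ| ≤ 1 := fun ξ => by
    rw [abs_of_pos (ha.2.1 ξ)]; exact symbol_le_one hsε ha ξ
  have hm₃ : BoundedMultiplier 1 fun _ _ z _ => a z :=
    ⟨by have := ha.1.continuous.measurable; fun_prop, fun p => ha1 _⟩
  have hE1 (f : ℝ → ℂ) : E1 κ a f =
      (((2 * Real.pi)⁻¹ : ℝ) : ℂ) * quadForm (b4k κ a) (ftPt f) (ftPt f) (ftPt f) (ftPt f) := by
    rw [Complex.ofReal_inv]; rfl
  refine ⟨fun t _ => ?_, fun t ht => ?_⟩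
  · rw [hE1, Complex.im_ofReal_mul]
    have := congrArg Complex.im (quadForm_b4k_slot3 (κ := κ) (a := a) (ftPt fun x => U t x)
      (ftPt fun x => U t x))
    rw [Complex.conj_im] at this
    rw [show (quadForm (b4k κ a) _ _ _ _).im = 0 by linarith, mul_zero]
  obtain ⟨S, hS, C, hSJ, hg, hg'⟩ := exists_uniform_decay hJopen
    (fun t ht => continuousAt_of_slope (hderiv t ht)) hcont ht
  have hd : ∀ τ ∈ S, ∀ ξ, HasDerivAt (fun τ => ftPt (fun x => U τ x) ξ)
      (ftPt (fun x => V τ x) ξ) τ := fun τ hτ ξ => ftPt_hasDerivAt (hderiv τ (hSJ hτ)) ξ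
  obtain ⟨⟨Cn, hn⟩, ⟨Cw, hw⟩, heq⟩ := fourier_equation hκ (hPDE t ht)
  have hgt := hg t (mem_of_mem_nhds hS)
  -- The product rule for both energies, before the equation is inserted.
  have d0 := energy_hasDerivAt ha.1.continuous ha.2.1 (symbol_le_one hsε ha) hS hg hg' hd
  have d1 := quadForm_hasDerivAt hb hS hg hg' hd
  have hcp := cubic_pairing hm₃ (U t)
  have hres := resonance_cancellation hb ha.1.continuous ha1 hgt hw
  have hVeq : ftPt (fun x => V t x) = fun ξ => _ := funext heq
  rw [quadForm_b4k_slot2, quadForm_b4k_slot3, quadForm_b4k_slot4, hVeq,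
    quadForm_add_left hb hw hn hgt hgt hgt] at d1
  simp only [hVeq] at d0
  have hE1' : (fun τ => (E1 κ a fun x => U τ x).re) = fun τ => (2 * Real.pi)⁻¹ *
      (quadForm (b4k κ a) (ftPt fun x => U τ x) (ftPt fun x => U τ x) (ftPt fun x => U τ x)
        (ftPt fun x => U τ x)).re := by
    ext τ; rw [hE1, Complex.re_ofReal_mul]
  have d1re := (Complex.reCLM.hasFDerivAt.comp_hasDerivAt t d1).const_mul (2 * Real.pi)⁻¹
  refine HasDerivAt.congr_deriv (d0.add (d1re.congr_of_eventuallyEq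
    (f₁ := fun τ => (E1 κ a fun x => U τ x).re)
    (Eventually.of_forall fun τ => congrFun hE1' τ))) ?_
  change _ = -(2 * κ / Real.pi) * (quadForm (b4k κ a)
    (ftPt fun x => ((‖U t x‖ ^ 2 : ℝ) : ℂ) * U t x) (ftPt fun x => U t x) (ftPt fun x => U t x)
    (ftPt fun x => U t x)).im
  set g := ftPt fun x => U t x with hgdef
  set n := ftPt fun x => ((‖U t x‖ ^ 2 : ℝ) : ℂ) * U t x with hndef
  -- Only the nonlinear part of the velocity contributes to the derivative of `E₀`.
  have hE0 : ∫ ξ, a ξ * (2 * (conj (g ξ) * (Complex.I * (((ξ ^ 2 : ℝ) : ℂ) * g ξ) +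
      Complex.I * κ * n ξ)).re) = -2 * κ * ((2 * Real.pi)⁻¹ *
        (quadForm (fun _ _ z _ => a z) g g g g).im) := by
    have hw2 : (fourierWeight : ℂ) ^ 2 = (((2 * Real.pi)⁻¹ : ℝ) : ℂ) := by
      exact_mod_cast fourierWeight_sq
    have hKint : Integrable fun ξ => (a ξ : ℂ) * (conj (g ξ) * n ξ) := by
      have c := Complex.continuous_conj.comp hgt.cont
      refine (hn.integrable.norm.const_mul C).mono'
        ((Complex.continuous_ofReal.comp ha.1.continuous).mul
          (c.mul hn.cont)).aestronglyMeasurable (ae_of_all _ fun ξ => ?_)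
      rw [norm_mul, norm_mul, RCLike.norm_conj, Complex.norm_real, Real.norm_eq_abs]
      calc _ ≤ 1 * (C * ‖n ξ‖) := by
            gcongr
            · exact ha1 ξ
            · exact hgt.bound' ξ
        _ = _ := one_mul _
    have him := Complex.imCLM.integral_comp_comm hKint
    rw [hcp, hw2, Complex.imCLM_apply, Complex.im_ofReal_mul] at him
    rw [← him, ← integral_const_mul]
    refine integral_congr_ae (ae_of_all _ fun ξ => ?_)
    simp only [Complex.imCLM_apply, Complex.im_ofReal_mul]
    simp only [Complex.mul_re, Complex.mul_im, Complex.add_re, Complex.add_im, Complex.I_re,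
      Complex.I_im, Complex.ofReal_re, Complex.ofReal_im, Complex.conj_re, Complex.conj_im]
    ring
  rw [hE0]
  simp only [Complex.reCLM_apply, Complex.add_re, Complex.mul_re, Complex.I_re, Complex.I_im,
    Complex.conj_re, Complex.mul_im, Complex.ofReal_re, Complex.ofReal_im]
  rw [hres]
  have := Real.pi_ne_zero
  field_simp
  ring
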